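/- Let M ≥ 1 and let U : ℝ → ℝ be three times continuously differentiable with |U'(x)| ≤ M, |U''(x)| ≤ M, and |U'''(x)| ≤ M for all x ∈ ℝ. There exists a constant C > 0, depending only on M, with the following property. For all h ∈ (0,1], p ∈ ℝ with |p| ≤ M, q > 0, τ ∈ (0,h), and functions x₁ : [0,τ] → ℝ and x₂ : [τ,h] → ℝ, each twice continuously differentiable with x₁'' = −U' ∘ x₁ and x₂'' = −U' ∘ x₂, satisfying x₁(0) = q, x₁'(0) = p, x₁(τ) = 0, x₂(τ) = 0, and x₂'(τ) = −x₁'(τ), the following bounds hold: |x₂(h) − (q + (2τ−h) p − (1/2)(h−2τ)² U'(q))| ≤ C h³ and |x₂'(h) − (−p + (2τ−h) U'(q) + (1/2)(h−2τ)² U''(q) p)| ≤ C h³. -/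

import Mathlib

/-!
Newton's equation is invariant under time reversal `(x, v) ↦ (x, -v)`, `t ↦ -t`, so a trajectory
whose velocity is reversed at time `τ` retraces its own path: at time `h` it is in the state which
the collisionless trajectory occupies at time `2τ - h`, with the opposite velocity. The expansion of
the collided trajectory at `h` is therefore the second order Taylor expansion of the collisionless
one at `2τ - h`, and the error is of order `|h - 2τ| ^ 3`. If `h ≤ 2τ` the Taylor expansion is that
of the incoming arc between the times `0` and `2τ - h`; otherwise the outgoing arc is back at the
initial position, with the opposite of the initial velocity, at time `2τ`, and it is expanded
between `2τ` and `h`.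
-/

open Set
open scoped NNReal Nat

section Taylor

variable {E : Type*} [NormedAddCommGroup E] [NormedSpace ℝ E] {a b C : ℝ}

theorem hasDerivAt_sub_pow_succ_div_factorial (a t : ℝ) (k : ℕ) :
    HasDerivAt (fun s ↦ (s - a) ^ (k + 1) / (k + 1)!) ((t - a) ^ k / k !) t := by
  refine ((((hasDerivAt_id t).sub_const a).pow (k + 1)).div_const _).congr_deriv ?_
  simp only [id, Nat.factorial_succ, Nat.cast_mul, add_tsub_cancel_right]
  field_simp

theorem norm_sub_taylor_sum_le {n : ℕ} {f : Fin (n + 1) → ℝ → E}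
    (hf : ∀ k : Fin n, ∀ t ∈ Icc a b,
      HasDerivWithinAt (f k.castSucc) (f k.succ t) (Icc a b) t)
    (hC : ∀ t ∈ Icc a b, ‖f (Fin.last n) t - f (Fin.last n) a‖ ≤ C * (t - a)) :
    ∀ t ∈ Icc a b,
      ‖f 0 t - ∑ k : Fin (n + 1), ((t - a) ^ (k : ℕ) / (k : ℕ)!) • f k a‖
        ≤ C * ((t - a) ^ (n + 1) / (n + 1)!) := by
  induction n with
  | zero => simpa using hC
  | succ n ih =>
    have remainder_tail := ih (f := Fin.tail f) (fun k ↦ hf k.succ) hC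
    have hasDeriv_remainder : ∀ t ∈ Icc a b, HasDerivWithinAt
        (fun s ↦ f 0 s - ∑ k : Fin (n + 2), ((s - a) ^ (k : ℕ) / (k : ℕ)!) • f k a)
        (Fin.tail f 0 t - ∑ k : Fin (n + 1), ((t - a) ^ (k : ℕ) / (k : ℕ)!) • Fin.tail f k a)
        (Icc a b) t := by
      intro t ht
      simp only [Fin.sum_univ_succ (n := n + 1), Fin.val_zero, pow_zero, Fin.val_succ]
      refine (hf 0 t ht).sub (.const_add _ (.fun_sum fun k _ ↦ ?_))
      exact (hasDerivAt_sub_pow_succ_div_factorial a t k).hasDerivWithinAt.smul_const _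
    refine image_norm_le_of_norm_deriv_right_le_deriv_boundary
      (fun t ht ↦ (hasDeriv_remainder t ht).continuousWithinAt)
      (fun t ht ↦ (hasDeriv_remainder t (Ico_subset_Icc_self ht)).mono_of_mem_nhdsWithin
        (Icc_mem_nhdsGE_of_mem ht)) ?_
      (fun t ↦ (hasDerivAt_sub_pow_succ_div_factorial a t (n + 1)).const_mul C)
      (fun t ht ↦ remainder_tail t (Ico_subset_Icc_self ht))
    simp [Fin.sum_univ_succ]

end Taylor

theorem lipschitzWith_fderiv_of_lipschitzWith_deriv {𝕜 E : Type*} [NontriviallyNormedField 𝕜]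
    [NormedAddCommGroup E] [NormedSpace 𝕜 E] {f : 𝕜 → E} {L : ℝ≥0}
    (hL : LipschitzWith L (deriv f)) : LipschitzWith L (fderiv 𝕜 f) := by
  simpa [Function.comp_def, toSpanSingleton_deriv] using
    (ContinuousLinearMap.toSpanSingletonLIE 𝕜 E).lipschitz.comp hL

/-- The pair `(x, v)` solves Newton's equation `x' = v`, `v' = F x` with force field `F` on the set
of times `s`. Derivatives are taken within `s`, hence are one-sided at the end points of an
interval. -/
structure IsNewtonSolutionOn {E : Type*} [NormedAddCommGroup E] [NormedSpace ℝ E]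
    (F : E → E) (x v : ℝ → E) (s : Set ℝ) : Prop where
  hasDerivWithinAt_position : ∀ t ∈ s, HasDerivWithinAt x (v t) s t
  hasDerivWithinAt_velocity : ∀ t ∈ s, HasDerivWithinAt v (F (x t)) s t

namespace IsNewtonSolutionOn

variable {E : Type*} [NormedAddCommGroup E] [NormedSpace ℝ E] {F : E → E} {A B L : ℝ≥0}
  {x v x₁ v₁ x₂ v₂ : ℝ → E} {s s' : Set ℝ} {a b τ t V : ℝ}

theorem mono (sol : IsNewtonSolutionOn F x v s) (hs : s' ⊆ s) : IsNewtonSolutionOn F x v s' where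
  hasDerivWithinAt_position t ht := (sol.hasDerivWithinAt_position t (hs ht)).mono hs
  hasDerivWithinAt_velocity t ht := (sol.hasDerivWithinAt_velocity t (hs ht)).mono hs

theorem timeReversal (sol : IsNewtonSolutionOn F x v s) (c : ℝ) :
    IsNewtonSolutionOn F (fun t ↦ x (c - t)) (fun t ↦ -v (c - t)) ((c - ·) ⁻¹' s) where
  hasDerivWithinAt_position t ht := by
    simpa [Function.comp_def] using (sol.hasDerivWithinAt_position _ ht).scomp t
      ((hasDerivAt_id t).const_sub c).hasDerivWithinAt (mapsTo_preimage _ _)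
  hasDerivWithinAt_velocity t ht := by
    simpa [Function.comp_def] using ((sol.hasDerivWithinAt_velocity _ ht).scomp t
      ((hasDerivAt_id t).const_sub c).hasDerivWithinAt (mapsTo_preimage _ _)).fun_neg

theorem hasDerivWithinAt_phase (sol : IsNewtonSolutionOn F x v s) (ht : t ∈ s) :
    HasDerivWithinAt (fun t ↦ (x t, v t)) (v t, F (x t)) s t :=
  (sol.hasDerivWithinAt_position t ht).prodMk (sol.hasDerivWithinAt_velocity t ht)

theorem eqOn_Icc (hB : LipschitzWith B F)
    (sol₁ : IsNewtonSolutionOn F x₁ v₁ (Icc a b)) (sol₂ : IsNewtonSolutionOn F x₂ v₂ (Icc a b))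
    (hx : x₁ a = x₂ a) (hv : v₁ a = v₂ a) :
    EqOn (fun t ↦ (x₁ t, v₁ t)) (fun t ↦ (x₂ t, v₂ t)) (Icc a b) :=
  ODE_solution_unique (v := fun (_ : ℝ) (z : E × E) ↦ (z.2, F z.1))
    (fun _ ↦ LipschitzWith.prod_snd.prodMk (hB.comp LipschitzWith.prod_fst))
    (fun _ ht ↦ (sol₁.hasDerivWithinAt_phase ht).continuousWithinAt)
    (fun _ ht ↦ (sol₁.hasDerivWithinAt_phase (Ico_subset_Icc_self ht)).mono_of_mem_nhdsWithin
      (Icc_mem_nhdsGE_of_mem ht))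
    (fun _ ht ↦ (sol₂.hasDerivWithinAt_phase ht).continuousWithinAt)
    (fun _ ht ↦ (sol₂.hasDerivWithinAt_phase (Ico_subset_Icc_self ht)).mono_of_mem_nhdsWithin
      (Icc_mem_nhdsGE_of_mem ht))
    (Prod.ext hx hv)

theorem eq_timeReversal (hB : LipschitzWith B F)
    (sol₁ : IsNewtonSolutionOn F x₁ v₁ (Icc a τ)) (sol₂ : IsNewtonSolutionOn F x₂ v₂ (Icc τ b))
    (hx : x₂ τ = x₁ τ) (hv : v₂ τ = -v₁ τ) (ht : t ∈ Icc τ b) (hat : a ≤ 2 * τ - t) :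
    x₂ t = x₁ (2 * τ - t) ∧ v₂ t = -v₁ (2 * τ - t) := by
  have reversed : IsNewtonSolutionOn F (fun s ↦ x₁ (2 * τ - s)) (fun s ↦ -v₁ (2 * τ - s))
      (Icc τ t) :=
    (sol₁.timeReversal (2 * τ)).mono fun s hs ↦ ⟨by linarith [hs.2], by linarith [hs.1]⟩
  have reflect_τ : 2 * τ - τ = τ := by ring
  exact Prod.ext_iff.mp <| eqOn_Icc hB (sol₂.mono (Icc_subset_Icc_right ht.2)) reversed
    (by simpa only [reflect_τ] using hx) (by simpa only [reflect_τ] using hv)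
    (right_mem_Icc.mpr ht.1)

theorem norm_velocity_sub_le (hA : ∀ y, ‖F y‖ ≤ A) (sol : IsNewtonSolutionOn F x v (Icc a b))
    (ht : t ∈ Icc a b) : ‖v t - v a‖ ≤ A * (t - a) :=
  norm_image_sub_le_of_norm_deriv_le_segment' sol.hasDerivWithinAt_velocity
    (fun s _ ↦ hA (x s)) t ht

theorem norm_velocity_le (hA : ∀ y, ‖F y‖ ≤ A) (sol : IsNewtonSolutionOn F x v (Icc a b))
    (hV : ‖v a‖ + A * (b - a) ≤ V) (ht : t ∈ Icc a b) : ‖v t‖ ≤ V :=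
  calc ‖v t‖ ≤ ‖v a‖ + ‖v t - v a‖ := norm_le_norm_add_norm_sub' _ _
    _ ≤ ‖v a‖ + A * (b - a) := by grw [sol.norm_velocity_sub_le hA ht, ht.2]
    _ ≤ V := hV

theorem norm_position_sub_le (sol : IsNewtonSolutionOn F x v (Icc a b))
    (hV : ∀ t ∈ Icc a b, ‖v t‖ ≤ V) (ht : t ∈ Icc a b) : ‖x t - x a‖ ≤ V * (t - a) :=
  norm_image_sub_le_of_norm_deriv_le_segment' sol.hasDerivWithinAt_position
    (fun s hs ↦ hV s (Ico_subset_Icc_self hs)) t ht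

theorem norm_position_sub_taylor_le (hB : LipschitzWith B F)
    (sol : IsNewtonSolutionOn F x v (Icc a b)) (hV : ∀ t ∈ Icc a b, ‖v t‖ ≤ V) (hab : a ≤ b) :
    ‖x b - (x a + (b - a) • v a + ((b - a) ^ 2 / 2) • F (x a))‖
      ≤ B * V / 6 * (b - a) ^ 3 := by
  have force_sub_le : ∀ t ∈ Icc a b, ‖F (x t) - F (x a)‖ ≤ B * V * (t - a) := fun t ht ↦
    calc ‖F (x t) - F (x a)‖ ≤ B * ‖x t - x a‖ := hB.norm_sub_le _ _
      _ ≤ B * (V * (t - a)) := by grw [sol.norm_position_sub_le hV ht]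
      _ = B * V * (t - a) := by ring
  have taylor := norm_sub_taylor_sum_le (f := ![x, v, fun t ↦ F (x t)])
    (Fin.forall_fin_two.mpr ⟨sol.hasDerivWithinAt_position, sol.hasDerivWithinAt_velocity⟩)
    force_sub_le b (right_mem_Icc.mpr hab)
  convert taylor using 1
  · simp [Fin.sum_univ_three]
  · norm_num [Nat.factorial]
    ring

theorem norm_fderiv_velocity_sub_le (hA : ∀ y, ‖F y‖ ≤ A) (hB : LipschitzWith B F)
    (hL : LipschitzWith L (fderiv ℝ F)) (sol : IsNewtonSolutionOn F x v (Icc a b))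
    (hV : ∀ t ∈ Icc a b, ‖v t‖ ≤ V) (ht : t ∈ Icc a b) :
    ‖fderiv ℝ F (x t) (v t) - fderiv ℝ F (x a) (v a)‖ ≤ (L * V ^ 2 + B * A) * (t - a) := by
  have hVt := hV t ht
  have position_sub_le := sol.norm_position_sub_le hV ht
  have fderiv_sub_le : ‖fderiv ℝ F (x t) - fderiv ℝ F (x a)‖ ≤ L * (V * (t - a)) := by
    grw [hL.norm_sub_le, position_sub_le]
  calc ‖fderiv ℝ F (x t) (v t) - fderiv ℝ F (x a) (v a)‖
      = ‖(fderiv ℝ F (x t) - fderiv ℝ F (x a)) (v t) + fderiv ℝ F (x a) (v t - v a)‖ := by simp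
    _ ≤ ‖fderiv ℝ F (x t) - fderiv ℝ F (x a)‖ * ‖v t‖ + ‖fderiv ℝ F (x a)‖ * ‖v t - v a‖ :=
      norm_add_le_of_le (ContinuousLinearMap.le_opNorm _ _) (ContinuousLinearMap.le_opNorm _ _)
    _ ≤ L * (V * (t - a)) * V + B * (A * (t - a)) := by
      gcongr
      · exact (norm_nonneg _).trans fderiv_sub_le
      · exact norm_fderiv_le_of_lipschitz ℝ hB
      · exact sol.norm_velocity_sub_le hA ht
    _ = (L * V ^ 2 + B * A) * (t - a) := by ring

theorem norm_velocity_sub_taylor_le (hF : Differentiable ℝ F) (hA : ∀ y, ‖F y‖ ≤ A)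
    (hB : LipschitzWith B F) (hL : LipschitzWith L (fderiv ℝ F))
    (sol : IsNewtonSolutionOn F x v (Icc a b)) (hV : ∀ t ∈ Icc a b, ‖v t‖ ≤ V) (hab : a ≤ b) :
    ‖v b - (v a + (b - a) • F (x a) + ((b - a) ^ 2 / 2) • fderiv ℝ F (x a) (v a))‖
      ≤ (L * V ^ 2 + B * A) / 6 * (b - a) ^ 3 := by
  have hasDeriv_force : ∀ t ∈ Icc a b,
      HasDerivWithinAt (fun t ↦ F (x t)) (fderiv ℝ F (x t) (v t)) (Icc a b) t := fun t ht ↦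
    (hF (x t)).hasFDerivAt.comp_hasDerivWithinAt t (sol.hasDerivWithinAt_position t ht)
  have taylor := norm_sub_taylor_sum_le
    (f := ![v, fun t ↦ F (x t), fun t ↦ fderiv ℝ F (x t) (v t)])
    (Fin.forall_fin_two.mpr ⟨sol.hasDerivWithinAt_velocity, hasDeriv_force⟩)
    (fun _ ht ↦ sol.norm_fderiv_velocity_sub_le hA hB hL hV ht) b (right_mem_Icc.mpr hab)
  convert taylor using 1
  · simp [Fin.sum_univ_three]
  · norm_num [Nat.factorial]
    ring

end IsNewtonSolutionOn

theorem stmt15_general {E : Type*} [NormedAddCommGroup E] [NormedSpace ℝ E] {F : E → E}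
    {A B L : ℝ≥0} (hF : Differentiable ℝ F) (hA : ∀ y, ‖F y‖ ≤ A) (hB : LipschitzWith B F)
    (hL : LipschitzWith L (fderiv ℝ F)) {h τ V : ℝ} (hτ : τ ∈ Icc 0 h) {x₁ v₁ x₂ v₂ : ℝ → E}
    (sol₁ : IsNewtonSolutionOn F x₁ v₁ (Icc 0 τ)) (sol₂ : IsNewtonSolutionOn F x₂ v₂ (Icc τ h))
    (hx : x₂ τ = x₁ τ) (hv : v₂ τ = -v₁ τ) (hV : ‖v₁ 0‖ + A * |h - 2 * τ| ≤ V) :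
    ‖x₂ h - (x₁ 0 + (2 * τ - h) • v₁ 0 + ((h - 2 * τ) ^ 2 / 2) • F (x₁ 0))‖
        ≤ B * V / 6 * |h - 2 * τ| ^ 3
      ∧ ‖v₂ h - (-v₁ 0 - (2 * τ - h) • F (x₁ 0)
            - ((h - 2 * τ) ^ 2 / 2) • fderiv ℝ F (x₁ 0) (v₁ 0))‖
        ≤ (L * V ^ 2 + B * A) / 6 * |h - 2 * τ| ^ 3 := by
  obtain ⟨hτ0, hτh⟩ := hτ
  rcases le_total h (2 * τ) with hle | hle
  · rw [abs_sub_comm, abs_of_nonneg (sub_nonneg.mpr hle)] at hV ⊢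
    obtain ⟨hxh, hvh⟩ := sol₁.eq_timeReversal hB sol₂ hx hv (right_mem_Icc.mpr hτh)
      (sub_nonneg.mpr hle)
    have incoming := sol₁.mono (Icc_subset_Icc_right (by linarith : 2 * τ - h ≤ τ))
    have speed_le : ∀ t ∈ Icc 0 (2 * τ - h), ‖v₁ t‖ ≤ V := fun t ht ↦
      incoming.norm_velocity_le hA (by rwa [sub_zero]) ht
    have position := incoming.norm_position_sub_taylor_le hB speed_le (sub_nonneg.mpr hle)
    have velocity := incoming.norm_velocity_sub_taylor_le hF hA hB hL speed_le
      (sub_nonneg.mpr hle)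
    rw [sub_zero] at position velocity
    rw [hxh, hvh, sub_sq_comm h]
    refine ⟨position, ?_⟩
    rw [← norm_neg] at velocity
    refine (congrArg norm ?_).trans_le velocity
    module
  · rw [abs_of_nonneg (sub_nonneg.mpr hle)] at hV ⊢
    obtain ⟨hx2τ, hv2τ⟩ := sol₁.eq_timeReversal hB sol₂ hx hv (t := 2 * τ)
      ⟨by linarith, hle⟩ (by simp)
    rw [sub_self] at hx2τ hv2τ
    have outgoing := sol₂.mono (Icc_subset_Icc_left (by linarith : τ ≤ 2 * τ))
    have speed_le : ∀ t ∈ Icc (2 * τ) h, ‖v₂ t‖ ≤ V := fun t ht ↦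
      outgoing.norm_velocity_le hA (by rwa [hv2τ, norm_neg]) ht
    have position := outgoing.norm_position_sub_taylor_le hB speed_le hle
    have velocity := outgoing.norm_velocity_sub_taylor_le hF hA hB hL speed_le hle
    rw [hx2τ, hv2τ] at position velocity
    rw [map_neg] at velocity
    constructor
    · refine (congrArg norm ?_).trans_le position
      module
    · refine (congrArg norm ?_).trans_le velocity
      module

theorem abs_sub_collision_expansion_le {U : ℝ → ℝ} {A B L : ℝ≥0}
    (hU : Differentiable ℝ (deriv U)) (hA : ∀ y, |deriv U y| ≤ A)
    (hB : ∀ y, |deriv (deriv U) y| ≤ B) (hL : LipschitzWith L (deriv (deriv U)))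
    {h τ V : ℝ} (hτ : τ ∈ Icc 0 h) {x₁ v₁ x₂ v₂ : ℝ → ℝ}
    (sol₁ : IsNewtonSolutionOn (fun y ↦ -deriv U y) x₁ v₁ (Icc 0 τ))
    (sol₂ : IsNewtonSolutionOn (fun y ↦ -deriv U y) x₂ v₂ (Icc τ h))
    (hx : x₂ τ = x₁ τ) (hv : v₂ τ = -v₁ τ) (hV : |v₁ 0| + A * |h - 2 * τ| ≤ V) :
    |x₂ h - (x₁ 0 + (2 * τ - h) * v₁ 0 - (1 / 2) * (h - 2 * τ) ^ 2 * deriv U (x₁ 0))|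
        ≤ B * V / 6 * |h - 2 * τ| ^ 3
      ∧ |v₂ h - (-v₁ 0 + (2 * τ - h) * deriv U (x₁ 0)
            + (1 / 2) * (h - 2 * τ) ^ 2 * deriv (deriv U) (x₁ 0) * v₁ 0)|
        ≤ (L * V ^ 2 + B * A) / 6 * |h - 2 * τ| ^ 3 := by
  have force_lipschitz : LipschitzWith B (fun y ↦ -deriv U y) :=
    (lipschitzWith_of_nnnorm_deriv_le hU hB).neg
  have force_deriv_lipschitz : LipschitzWith L (deriv fun y ↦ -deriv U y) := by
    rw [deriv.fun_neg']
    exact hL.neg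
  obtain ⟨position, velocity⟩ := stmt15_general hU.fun_neg (fun y ↦ by simpa using hA y)
    force_lipschitz (lipschitzWith_fderiv_of_lipschitzWith_deriv force_deriv_lipschitz)
    hτ sol₁ sol₂ hx hv hV
  constructor
  · refine (congrArg abs ?_).trans_le position
    simp only [smul_eq_mul]
    ring
  · refine (congrArg abs ?_).trans_le velocity
    simp only [smul_eq_mul, fderiv_eq_smul_deriv, deriv.fun_neg]
    ring

/-- Taylor expansion of the exact solution of deterministic Hamiltonian dynamics on the
half-line with one elastic collision at the boundary `{0}` at time `τ ∈ (0,h)`: the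
trajectory solves `x'' = −U'(x)` before (`x₁`, with velocity `v₁`) and after (`x₂`, with
velocity `v₂`) the collision, the velocity being reversed at time `τ`.  The constant `C`
depends only on the bound `M` on `U'`, `U''`, `U'''` and on the initial speed. -/
theorem stmt15 (M : ℝ) (hM : 1 ≤ M) :
    ∃ C > (0 : ℝ), ∀ U : ℝ → ℝ, ContDiff ℝ 3 U →
      (∀ x, |deriv U x| ≤ M) →
      (∀ x, |deriv (deriv U) x| ≤ M) →
      (∀ x, |deriv (deriv (deriv U)) x| ≤ M) →
      ∀ h ∈ Set.Ioc (0 : ℝ) 1, ∀ p : ℝ, |p| ≤ M → ∀ q : ℝ, 0 < q →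
      ∀ τ ∈ Set.Ioo (0 : ℝ) h, ∀ x₁ v₁ x₂ v₂ : ℝ → ℝ,
        (∀ s ∈ Set.Icc (0 : ℝ) τ, HasDerivAt x₁ (v₁ s) s) →
        (∀ s ∈ Set.Icc (0 : ℝ) τ, HasDerivAt v₁ (-deriv U (x₁ s)) s) →
        (∀ s ∈ Set.Icc τ h, HasDerivAt x₂ (v₂ s) s) →
        (∀ s ∈ Set.Icc τ h, HasDerivAt v₂ (-deriv U (x₂ s)) s) →
        x₁ 0 = q → v₁ 0 = p → x₁ τ = 0 → x₂ τ = 0 → v₂ τ = -v₁ τ →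
        |x₂ h - (q + (2 * τ - h) * p - (1 / 2) * (h - 2 * τ) ^ 2 * deriv U q)|
            ≤ C * h ^ 3
        ∧ |v₂ h - (-p + (2 * τ - h) * deriv U q
              + (1 / 2) * (h - 2 * τ) ^ 2 * deriv (deriv U) q * p)|
            ≤ C * h ^ 3 := by
  lift M to ℝ≥0 using zero_le_one.trans hM
  refine ⟨M ^ 3, by positivity, ?_⟩
  rintro U hU hU₁ hU₂ hU₃ h ⟨-, hh⟩ p hp q - τ ⟨hτ0, hτh⟩ x₁ v₁ x₂ v₂ hx₁ hv₁ hx₂ hv₂ rfl rfl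
    hx₁τ hx₂τ hvτ
  have hU' : ContDiff ℝ 2 (deriv U) := hU.deriv' (n := 2)
  have hU'' : ContDiff ℝ 1 (deriv (deriv U)) := hU'.deriv' (n := 1)
  have time_le : |h - 2 * τ| ≤ h := abs_le.mpr ⟨by linarith, by linarith⟩
  have speed_le : |v₁ 0| + M * |h - 2 * τ| ≤ 2 * M := by grw [hp, time_le, hh]; linarith
  obtain ⟨position, velocity⟩ := abs_sub_collision_expansion_le
    (hU'.differentiable two_ne_zero) hU₁ hU₂
    (lipschitzWith_of_nnnorm_deriv_le (hU''.differentiable one_ne_zero) hU₃) ⟨hτ0.le, hτh.le⟩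
    ⟨fun t ht ↦ (hx₁ t ht).hasDerivWithinAt, fun t ht ↦ (hv₁ t ht).hasDerivWithinAt⟩
    ⟨fun t ht ↦ (hx₂ t ht).hasDerivWithinAt, fun t ht ↦ (hv₂ t ht).hasDerivWithinAt⟩
    (hx₂τ.trans hx₁τ.symm) hvτ speed_le
  have sq_le_cube : (M : ℝ) ^ 2 ≤ M ^ 3 := pow_le_pow_right₀ hM (by norm_num)
  have cube_nonneg : (0 : ℝ) ≤ M ^ 3 := by positivity
  exact ⟨position.trans (by gcongr; linarith), velocity.trans (by gcongr; linarith)⟩
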